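/- Let p_1 ≥ p_2 ≥ … ≥ p_K > 0 and n_1 ≥ n_2 ≥ … ≥ n_{L−1} ≥ 0 with L ≤ K. Define A_{i_1,…,i_{L−1}} = S_{\{i_1,…,i_{L−1}\}} · ∏_{t=1}^{L−1} p_{i_t}^{n_t}, where for a set I of L−1 distinct indices, S_I = [z^m] ∏_{j∉I} T_u(p_j z) with T_u(x)=Σ_{r=0}^{u} x^r/r!, m ≥ 0 and u = n_{L−1}. Then the maximum of A_{i_1,…,i_{L−1}} over all injective tuples is attained at (i_1,…,i_{L−1}) = (1,2,…,L−1), and the maximum over injective tuples with i_1 ≠ 1 is attained at (2,1,3,…,L−1). -/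

import Mathlib

open Polynomial Finset

/-!
Two exchanges never decrease `A`, where `0 ≤ b ≤ a` are the values of `p` at two indices. If both
indices are used, `S` does not change, and moving `a` to the larger exponent is the rearrangement
inequality. If only `b` is used, say with exponent `n`, replacing it by `a` turns a factor
`T_u(a z)` of the product defining `S` into `T_u(b z)`; this is compensated coefficientwise by the
monomial, since `a ^ r * b ^ n ≤ b ^ r * a ^ n` for all `r ≤ u ≤ n`. Repeating the exchange at the
first slot where a tuple differs from the target leads to the target, as long as the target is
greedy at every such slot. The tuple `(2, 1, 3, …)` fails this at its first slot only, where the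
constraint `i₁ ≠ 1` makes up for it.
-/

section Inequalities

variable {R : Type*} [CommSemiring R] [PartialOrder R] [IsOrderedRing R]

theorem pow_mul_pow_le_pow_mul_pow {a b : R} (hb : 0 ≤ b) (hab : b ≤ a) {r n : ℕ} (hrn : r ≤ n) :
    a ^ r * b ^ n ≤ b ^ r * a ^ n := by
  obtain ⟨d, rfl⟩ := Nat.exists_eq_add_of_le hrn
  have ha : 0 ≤ a := hb.trans hab
  calc a ^ r * b ^ (r + d) = a ^ r * b ^ r * b ^ d := by ring
    _ ≤ a ^ r * b ^ r * a ^ d := by gcongr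
    _ = b ^ r * a ^ (r + d) := by ring

theorem prod_pow_le_prod_swap_pow {τ : Type*} [Fintype τ] [DecidableEq τ] {x : τ → R}
    (hx : ∀ r, 0 ≤ x r) {n : τ → ℕ} {s t : τ} (hxst : x t ≤ x s) (hnst : n s ≤ n t) :
    ∏ r, x r ^ n r ≤ ∏ r, x (Equiv.swap s t r) ^ n r := by
  rcases eq_or_ne s t with rfl | hst
  · simp
  have hrest : ∏ r ∈ {s, t}ᶜ, x (Equiv.swap s t r) ^ n r = ∏ r ∈ {s, t}ᶜ, x r ^ n r := by
    refine prod_congr rfl fun r hr => ?_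
    simp only [mem_compl, mem_insert, mem_singleton, not_or] at hr
    rw [Equiv.swap_apply_of_ne_of_ne hr.1 hr.2]
  rw [← prod_mul_prod_compl {s, t},
    ← prod_mul_prod_compl {s, t} fun r => x (Equiv.swap s t r) ^ n r, hrest,
    prod_pair hst, prod_pair hst, Equiv.swap_apply_left, Equiv.swap_apply_right]
  exact mul_le_mul_of_nonneg_right (pow_mul_pow_le_pow_mul_pow (hx t) hxst hnst)
    (prod_nonneg fun r _ => pow_nonneg (hx r) _)

theorem coeff_prod_nonneg {ι : Type*} {s : Finset ι} {g : ι → R[X]}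
    (hg : ∀ j ∈ s, ∀ k, 0 ≤ (g j).coeff k) : ∀ k, 0 ≤ (∏ j ∈ s, g j).coeff k := by
  refine prod_induction g (fun q => ∀ k, 0 ≤ q.coeff k) (fun q q' hq hq' k => ?_) (fun k => ?_) hg
  · rw [coeff_mul]
    exact sum_nonneg fun x _ => mul_nonneg (hq x.1) (hq' x.2)
  · rw [coeff_one]
    split_ifs
    exacts [zero_le_one, le_rfl]

theorem coeff_comp_mul_mul_pow_le {f q : R[X]} (hf : ∀ k, 0 ≤ f.coeff k) (hq : ∀ k, 0 ≤ q.coeff k)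
    {a b : R} (hb : 0 ≤ b) (hab : b ≤ a) {n : ℕ} (hn : f.natDegree ≤ n) (m : ℕ) :
    (f.comp (C a * X) * q).coeff m * b ^ n ≤ (f.comp (C b * X) * q).coeff m * a ^ n := by
  simp only [coeff_mul, sum_mul, comp_C_mul_X_coeff]
  refine sum_le_sum fun ⟨r, k⟩ _ => ?_
  rcases le_or_gt r n with hr | hr
  · calc f.coeff r * a ^ r * q.coeff k * b ^ n
        = f.coeff r * q.coeff k * (a ^ r * b ^ n) := by ring
      _ ≤ f.coeff r * q.coeff k * (b ^ r * a ^ n) :=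
        mul_le_mul_of_nonneg_left (pow_mul_pow_le_pow_mul_pow hb hab hr) (mul_nonneg (hf r) (hq k))
      _ = f.coeff r * b ^ r * q.coeff k * a ^ n := by ring
  · simp [coeff_eq_zero_of_natDegree_lt (hn.trans_lt hr)]

end Inequalities

section TupleWeight

variable {R ι τ : Type*} [CommSemiring R] [Fintype ι] [DecidableEq ι] [Fintype τ]

/-- The coefficient `S_I = [z^m] ∏_{j ∉ I} f(p_j z)`, for an arbitrary polynomial `f` in place of
`T_u`, which is `PowerSeries.trunc (u + 1) (PowerSeries.exp ℝ)`. -/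
noncomputable def complCoeff (f : R[X]) (p : ι → R) (m : ℕ) (I : Finset ι) : R :=
  (∏ j ∈ Iᶜ, f.comp (C (p j) * X)).coeff m

/-- The quantity `A_ψ = S_{range ψ} ∏_t p_{ψ t} ^ n_t` that is maximized over the injective tuples
`ψ`; the slots `t` of a tuple and its entries are taken from arbitrary finite types. -/
noncomputable def tupleWeight (f : R[X]) (p : ι → R) (n : τ → ℕ) (m : ℕ) (ψ : τ → ι) : R :=
  complCoeff f p m (univ.image ψ) * ∏ t, p (ψ t) ^ n t

theorem complCoeff_congr {f : R[X]} {p q : ι → R} {m : ℕ} {I : Finset ι}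
    (h : ∀ j ∉ I, p j = q j) : complCoeff f p m I = complCoeff f q m I := by
  unfold complCoeff
  congr 1
  exact prod_congr rfl fun j hj => by rw [h j (mem_compl.mp hj)]

theorem complCoeff_eq_coeff_mul {f : R[X]} {p : ι → R} {m : ℕ} {I : Finset ι} {i : ι}
    (hi : i ∉ I) :
    complCoeff f p m I =
      (f.comp (C (p i) * X) * ∏ j ∈ (insert i I)ᶜ, f.comp (C (p j) * X)).coeff m := by
  rw [complCoeff, compl_insert,
    mul_prod_erase _ (fun j => f.comp (C (p j) * X)) (mem_compl.mpr hi)]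

theorem tupleWeight_perm_comp (f : R[X]) (p : ι → R) (n : τ → ℕ) (m : ℕ) (σ : Equiv.Perm ι)
    (ψ : τ → ι) : tupleWeight f p n m (σ ∘ ψ) = tupleWeight f (p ∘ σ) n m ψ := by
  unfold tupleWeight complCoeff
  congr 2
  exact (prod_equiv σ (by simp) fun _ _ => rfl).symm

variable [PartialOrder R] [IsOrderedRing R]

theorem complCoeff_nonneg {f : R[X]} (hf : ∀ k, 0 ≤ f.coeff k) {p : ι → R} (hp : ∀ i, 0 ≤ p i)
    (m : ℕ) (I : Finset ι) : 0 ≤ complCoeff f p m I := by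
  refine coeff_prod_nonneg (fun j _ k => ?_) m
  rw [comp_C_mul_X_coeff]
  exact mul_nonneg (hf k) (pow_nonneg (hp j) k)

theorem tupleWeight_le_swap_of_mem_range {f : R[X]} (hf : ∀ k, 0 ≤ f.coeff k)
    {p : ι → R} (hp : ∀ i, 0 ≤ p i) {n : τ → ℕ} (m : ℕ) {ψ : τ → ι} (hψ : Function.Injective ψ)
    {s t : τ} (hpst : p (ψ t) ≤ p (ψ s)) (hnst : n s ≤ n t) :
    tupleWeight f p n m ψ ≤ tupleWeight f p n m (Equiv.swap (ψ s) (ψ t) ∘ ψ) := by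
  classical
  have hS : complCoeff f (p ∘ Equiv.swap (ψ s) (ψ t)) m (univ.image ψ)
      = complCoeff f p m (univ.image ψ) := by
    refine complCoeff_congr fun j hj => ?_
    have hne : ∀ r, j ≠ ψ r := by rintro r rfl; simp at hj
    rw [Function.comp_apply, Equiv.swap_apply_of_ne_of_ne (hne s) (hne t)]
  rw [tupleWeight_perm_comp, tupleWeight, tupleWeight, hS]
  simp only [Function.comp_apply, hψ.swap_apply]
  exact mul_le_mul_of_nonneg_left (prod_pow_le_prod_swap_pow (fun r => hp (ψ r)) hpst hnst)
    (complCoeff_nonneg hf hp m _)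

theorem tupleWeight_le_swap_of_notMem_range {f : R[X]} (hf : ∀ k, 0 ≤ f.coeff k)
    {p : ι → R} (hp : ∀ i, 0 ≤ p i) {n : τ → ℕ} (m : ℕ) {ψ : τ → ι} (hψ : Function.Injective ψ)
    {i : ι} (hi : i ∉ Set.range ψ) {t : τ} (hpi : p (ψ t) ≤ p i) (hn : f.natDegree ≤ n t) :
    tupleWeight f p n m ψ ≤ tupleWeight f p n m (Equiv.swap i (ψ t) ∘ ψ) := by
  classical
  have hiI : i ∉ univ.image ψ := by simpa using hi
  set q := ∏ j ∈ (insert i (univ.image ψ))ᶜ, f.comp (C (p j) * X)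
  have hq : ∀ k, 0 ≤ q.coeff k := fun k => complCoeff_nonneg hf hp k _
  have hS : complCoeff f p m (univ.image ψ) = (f.comp (C (p i) * X) * q).coeff m :=
    complCoeff_eq_coeff_mul hiI
  have hS_swap : complCoeff f (p ∘ Equiv.swap i (ψ t)) m (univ.image ψ)
      = (f.comp (C (p (ψ t)) * X) * q).coeff m := by
    rw [complCoeff_eq_coeff_mul hiI, Function.comp_apply, Equiv.swap_apply_left]
    congr 2
    refine prod_congr rfl fun j hj => ?_
    simp only [mem_compl, mem_insert, mem_image, mem_univ, true_and, not_or, not_exists] at hj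
    rw [Function.comp_apply, Equiv.swap_apply_of_ne_of_ne hj.1 (Ne.symm (hj.2 t))]
  have hrest : ∏ s ∈ {t}ᶜ, p (Equiv.swap i (ψ t) (ψ s)) ^ n s = ∏ s ∈ {t}ᶜ, p (ψ s) ^ n s := by
    refine prod_congr rfl fun s hs => ?_
    have hst : s ≠ t := by simpa using hs
    rw [Equiv.swap_apply_of_ne_of_ne (fun h => hi ⟨s, h⟩) (hψ.ne hst)]
  rw [tupleWeight_perm_comp, tupleWeight, tupleWeight, hS, hS_swap,
    Fintype.prod_eq_mul_prod_compl t, Fintype.prod_eq_mul_prod_compl t]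
  simp only [Function.comp_apply, Equiv.swap_apply_right]
  rw [hrest, ← mul_assoc, ← mul_assoc]
  exact mul_le_mul_of_nonneg_right (coeff_comp_mul_mul_pow_le hf hq (hp _) hpi hn m)
    (prod_nonneg fun s _ => pow_nonneg (hp _) _)

theorem tupleWeight_le_swap {f : R[X]} (hf : ∀ k, 0 ≤ f.coeff k) {p : ι → R} (hp : ∀ i, 0 ≤ p i)
    {n : τ → ℕ} (m : ℕ) {ψ : τ → ι} (hψ : Function.Injective ψ) {i : ι} {t : τ}
    (hpi : p (ψ t) ≤ p i) (hn : ∀ s, ψ s = i → n s ≤ n t) (hdeg : f.natDegree ≤ n t) :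
    tupleWeight f p n m ψ ≤ tupleWeight f p n m (Equiv.swap i (ψ t) ∘ ψ) := by
  classical
  by_cases hi : i ∈ Set.range ψ
  · obtain ⟨s, rfl⟩ := hi
    exact tupleWeight_le_swap_of_mem_range hf hp m hψ hpi (hn s rfl)
  · exact tupleWeight_le_swap_of_notMem_range hf hp m hψ hi hpi hdeg

theorem tupleWeight_le_of_greedy [LinearOrder τ] {f : R[X]} (hf : ∀ k, 0 ≤ f.coeff k)
    {p : ι → R} (hp : ∀ i, 0 ≤ p i) {n : τ → ℕ} (hn : Antitone n)
    (hdeg : ∀ t, f.natDegree ≤ n t) (m : ℕ) {φ : τ → ι} (hφ : Function.Injective φ) {ψ : τ → ι}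
    (hψ : Function.Injective ψ) (hgreedy : ∀ t, ψ t ≠ φ t → ∀ i ∉ φ '' Set.Iio t, p i ≤ p (φ t)) :
    tupleWeight f p n m ψ ≤ tupleWeight f p n m φ := by
  induction hd : #{t | ψ t ≠ φ t} using Nat.strong_induction_on generalizing ψ with | _ d ih
  by_cases heq : ψ = φ
  · rw [heq]
  obtain ⟨t, ht, hbefore⟩ : ∃ t, ψ t ≠ φ t ∧ ∀ s < t, ψ s = φ s := by
    obtain ⟨t, ht, hmin⟩ := wellFounded_lt.has_min {t | ψ t ≠ φ t} (Function.ne_iff.mp heq)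
    exact ⟨t, ht, fun s hs => not_not.mp fun h => hmin s h hs⟩
  have hfresh : ψ t ∉ φ '' Set.Iio t := by
    rintro ⟨s, hs, hst⟩
    exact hs.ne (hψ ((hbefore s hs).trans hst))
  have hlater : ∀ s, ψ s = φ t → t ≤ s := fun s hs =>
    not_lt.mp fun hst => hst.ne (hφ ((hbefore s hst).symm.trans hs))
  set ψ' := Equiv.swap (φ t) (ψ t) ∘ ψ with hψ'
  have ht' : ψ' t = φ t := Equiv.swap_apply_right _ _
  have hagree : ∀ s, ψ s = φ s → ψ' s = φ s := fun s hs => by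
    have hst : s ≠ t := by rintro rfl; exact ht hs
    rw [hψ', Function.comp_apply, Equiv.swap_apply_of_ne_of_ne (hs ▸ hφ.ne hst) (hψ.ne hst), hs]
  have hfewer : #{s | ψ' s ≠ φ s} < #{s | ψ s ≠ φ s} := by
    refine card_lt_card (ssubset_iff_of_subset ?_ |>.mpr ⟨t, by simpa using ht, by simpa using ht'⟩)
    exact monotone_filter_right _ fun s _ => mt (hagree s)
  have hstep : tupleWeight f p n m ψ ≤ tupleWeight f p n m ψ' :=
    tupleWeight_le_swap hf hp m hψ (hgreedy t ht _ hfresh) (fun s hs => hn (hlater s hs)) (hdeg t)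
  exact hstep.trans <| ih _ (hd ▸ hfewer) ((Equiv.injective _).comp hψ)
    (fun s hs => hgreedy s (mt (hagree s) hs)) rfl

end TupleWeight

section Targets

variable {K N : ℕ}

theorem castLE_le_of_notMem_image_Iio (h : N ≤ K) (t : Fin N) {i : Fin K}
    (hi : i ∉ Fin.castLE h '' Set.Iio t) : Fin.castLE h t ≤ i :=
  not_lt.mp fun hlt => hi ⟨⟨i, lt_trans hlt t.isLt⟩, hlt, rfl⟩

theorem val_swap_zero_one (hK : 1 < K) (i : Fin K) :
    (Equiv.swap ⟨0, by omega⟩ ⟨1, hK⟩ i : Fin K).val =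
      if i.val = 0 then 1 else if i.val = 1 then 0 else i.val := by
  simp only [Equiv.swap_apply_def, Fin.ext_iff]
  split_ifs <;> rfl

theorem swap_zero_one_comp_castLE (h : N ≤ K) (hK : 1 < K) :
    (Equiv.swap ⟨0, by omega⟩ ⟨1, hK⟩ ∘ Fin.castLE h : Fin N → Fin K) =
      fun t => if t.val = 0 then ⟨1, hK⟩ else if t.val = 1 then ⟨0, by omega⟩
        else Fin.castLE h t := by
  funext t
  simp only [Function.comp_apply, Equiv.swap_apply_def, Fin.ext_iff, Fin.val_castLE]

theorem swap_castLE_le_of_notMem_image_Iio (h : N ≤ K) (hK : 1 < K) {t : Fin N} (ht : t.val ≠ 0)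
    {i : Fin K} (hi : i ∉ Equiv.swap ⟨0, by omega⟩ ⟨1, hK⟩ ∘ Fin.castLE h '' Set.Iio t) :
    (Equiv.swap ⟨0, by omega⟩ ⟨1, hK⟩ ∘ Fin.castLE h) t ≤ i := by
  set σ : Equiv.Perm (Fin K) := Equiv.swap ⟨0, by omega⟩ ⟨1, hK⟩
  by_contra! hlt
  have hσi : (σ i).val < t.val := by
    rw [Function.comp_apply, Fin.lt_def, val_swap_zero_one, Fin.val_castLE] at hlt
    rw [val_swap_zero_one]
    split_ifs at hlt ⊢ <;> omega
  exact hi ⟨⟨σ i, hσi.trans t.isLt⟩, hσi, (Equiv.swap _ _).symm_apply_apply i⟩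

end Targets

theorem stmt_7_general {R : Type*} [CommSemiring R] [PartialOrder R] [IsOrderedRing R] {K N : ℕ}
    (hN : 0 < N) (hNK : N < K) {f : R[X]} (hf : ∀ k, 0 ≤ f.coeff k) {p : Fin K → R}
    (hp : ∀ i, 0 ≤ p i) (hpanti : Antitone p) {n : Fin N → ℕ} (hn : Antitone n)
    (hdeg : ∀ t, f.natDegree ≤ n t) (m : ℕ) :
    (∀ ψ : Fin N → Fin K, Function.Injective ψ →
      tupleWeight f p n m ψ ≤ tupleWeight f p n m (Fin.castLE hNK.le)) ∧
    (∀ ψ : Fin N → Fin K, Function.Injective ψ → ψ ⟨0, hN⟩ ≠ ⟨0, by omega⟩ →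
      tupleWeight f p n m ψ ≤ tupleWeight f p n m
        (Equiv.swap ⟨0, by omega⟩ ⟨1, by omega⟩ ∘ Fin.castLE hNK.le)) := by
  have hcast : Function.Injective (Fin.castLE hNK.le) := Fin.castLE_injective _
  refine ⟨fun ψ hψ => tupleWeight_le_of_greedy hf hp hn hdeg m hcast hψ
    fun t _ i hi => hpanti (castLE_le_of_notMem_image_Iio _ t hi), fun ψ hψ hψ0 => ?_⟩
  have hle : ⟨1, by omega⟩ ≤ ψ ⟨0, hN⟩ := Nat.one_le_iff_ne_zero.mpr (Fin.val_ne_of_ne hψ0)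
  have hfirst := tupleWeight_le_swap hf hp (n := n) m hψ (hpanti hle)
    (fun s _ => hn (Nat.zero_le s.val)) (hdeg _)
  refine hfirst.trans (tupleWeight_le_of_greedy hf hp hn hdeg m ((Equiv.injective _).comp hcast)
    ((Equiv.injective _).comp hψ) fun t ht i hi =>
      hpanti (swap_castLE_le_of_notMem_image_Iio _ _ ?_ hi))
  intro ht0
  obtain rfl : t = ⟨0, hN⟩ := Fin.ext ht0
  exact ht ((Equiv.swap_apply_right _ _).trans (Equiv.swap_apply_left _ _).symm)

theorem trunc_exp_comp_C_mul_X {R : Type*} [Field R] [CharZero R] (u : ℕ) (x : R) :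
    (PowerSeries.trunc (u + 1) (PowerSeries.exp R)).comp (C x * X) =
      ∑ r ∈ range (u + 1), C (x ^ r / (r.factorial : R)) * X ^ r := by
  ext k
  simp only [comp_C_mul_X_coeff, PowerSeries.coeff_trunc, PowerSeries.coeff_exp, finsetSum_coeff,
    coeff_C_mul_X_pow, sum_ite_eq, mem_range, ite_mul, zero_mul]
  simp [div_eq_inv_mul]

theorem coeff_trunc_exp_nonneg {R : Type*} [Field R] [LinearOrder R] [IsStrictOrderedRing R]
    (u k : ℕ) : 0 ≤ (PowerSeries.trunc u (PowerSeries.exp R)).coeff k := by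
  rw [PowerSeries.coeff_trunc, PowerSeries.coeff_exp]
  split_ifs
  · simp
  · exact le_rfl

/-- among injective tuples, `A_{i₁,…,i_{L−1}}` is maximized by
`(1,2,…,L−1)`, and among injective tuples with `i₁ ≠ 1` by `(2,1,3,…,L−1)`. -/
theorem stmt_7 (K L : ℕ) (hL : 2 ≤ L) (hLK : L ≤ K)
    (p : Fin K → ℝ) (hpos : ∀ i, 0 < p i)
    (hpmono : ∀ i j : Fin K, i ≤ j → p j ≤ p i)
    (nn : Fin (L - 1) → ℕ)
    (hnmono : ∀ s t : Fin (L - 1), s ≤ t → nn t ≤ nn s)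
    (m : ℕ) (u : ℕ) (hu : u = nn ⟨L - 2, by omega⟩)
    (S : Finset (Fin K) → ℝ)
    (hS : ∀ I : Finset (Fin K), S I =
      (∏ j ∈ Iᶜ, (∑ r ∈ Finset.range (u + 1),
        Polynomial.C ((p j) ^ r / (r.factorial : ℝ)) * Polynomial.X ^ r :
          Polynomial ℝ)).coeff m)
    (A : (Fin (L - 1) → Fin K) → ℝ)
    (hA : ∀ ψ : Fin (L - 1) → Fin K,
      A ψ = S (Finset.univ.image ψ) * ∏ t, p (ψ t) ^ nn t) :
    (∀ ψ : Fin (L - 1) → Fin K, Function.Injective ψ →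
      A ψ ≤ A (fun t => Fin.castLE (by omega) t)) ∧
    (∀ ψ : Fin (L - 1) → Fin K, Function.Injective ψ →
      ψ ⟨0, by omega⟩ ≠ ⟨0, by omega⟩ →
      A ψ ≤ A (fun t =>
        if t.val = 0 then (⟨1, by omega⟩ : Fin K)
        else if t.val = 1 then ⟨0, by omega⟩
        else Fin.castLE (by omega) t)) := by
  obtain rfl : A = tupleWeight (PowerSeries.trunc (u + 1) (PowerSeries.exp ℝ)) p nn m := by
    funext ψ
    simp only [hA, hS, tupleWeight, complCoeff, trunc_exp_comp_C_mul_X]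
  have hdeg (t : Fin (L - 1)) :
      (PowerSeries.trunc (u + 1) (PowerSeries.exp ℝ)).natDegree ≤ nn t :=
    (Nat.lt_succ_iff.mp (PowerSeries.natDegree_trunc_lt _ u)).trans
      (hu.le.trans (hnmono t _ (Fin.le_def.mpr (by dsimp only; omega))))
  rw [← swap_zero_one_comp_castLE (by omega) (by omega)]
  exact stmt_7_general (by omega) (by omega) (coeff_trunc_exp_nonneg (u + 1))
    (fun i => (hpos i).le) hpmono hnmono hdeg m
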